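/- Assume the Felli–Schneider condition Λ = 4(d−1)/(q²−4). For ε ∈ [0,1) define E^{(0)}(ε) := inf { ∫_ℝ ((1−ε)((g′)² + Λg²) − (q−1)u^{q−2}g² − 2 M u^{2q−3} g) ds : g ∈ H¹(ℝ), ∫_ℝ g u^{q−1} ds = 0, ∫_ℝ g u^{q−2} u′ ds = 0 }, where M := (q−1)(q−2)√|𝕊^{d−1}|/(2d). Then, as ε → 0⁺, E^{(0)}(ε) = −(β^{3q−4}/α) · (|𝕊^{d−1}|/(4d²)) · (Γ((3q−4)/(q−2)) √π / Γ((3q−4)/(q−2) + 1/2)) · (q(q−2)³/(4(3q−2))) + O(ε). -/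

import Mathlib

/-!
Write `D(g) = ∫ (g'² + Λg²)`, `V(g) = ∫ (q-1)u^{q-2}g²` and `f = M u^{2q-3}`, so that `E⁽⁰⁾(ε)` is
the infimum of `(1-ε)D(g) - V(g) - 2∫fg` over `g` orthogonal to `u^{q-1}` and `u^{q-2}u'`.

*Coercivity.* After rescaling by `α`, with `c = 2/(q-2)`, `D` becomes the form of `-∂² + c²`, `V`
becomes `(c+1)(c+2)` times the `sech²`-weighted `L²` norm, and the two constraints say that `g` is
orthogonal to the first two eigenfunctions of `-∂² + c²` relative to the weight `sech²`. The third
eigenvalue is `(c+2)(c+3)` (`third_eigenvalue_bound`): one solves `m' - (c+1) tanh m = sech h`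
twice (`ladder_exists`), each step removing one orthogonality condition and raising `c` by one
(`ladder_bound`), and ends with the positivity of `∫ (n' + (c+2) tanh n)²`
(`square_identity`). Hence `V ≤ κD` with `κ = q/(3q-4) < 1` on the constraint space (`coercivity`).

*Minimizer.* From `u'² = Λu² - (2/q)u^q`, the function `gmin = A u^{q-1} + B u` solves the
Euler–Lagrange equation `-g'' + Λg - (q-1)u^{q-2}g = f + μ u^{q-1}` for suitable `A`, `μ`
(`hasDerivAt_gmin'`), and `B` is chosen to make it orthogonal to `u^{q-1}`. It is even, so
the other constraint is automatic. Completing the square (`energy_identity`), the energy of an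
admissible `g` is `D(g - gmin) - V(g - gmin) - εD(g) - ∫ f gmin`. Taking `g = gmin` bounds
`E⁽⁰⁾(ε)` above by `-εD(gmin) - ∫ f gmin`; coercivity and `D(g) ≤ 2D(gmin) + 2D(g - gmin)` bound it
below by `-2εD(gmin) - ∫ f gmin` for `0 ≤ ε < (1-κ)/2`.

*Constant.* The moments of `u` satisfy a two-term recursion (`moment_recursion`), which reduces
`∫ f gmin` to `∫ u^{3q-4}`, a Beta integral (`integral_Ufun_rpow`).
-/

open MeasureTheory Real Filter Topology Asymptotics

noncomputable section

/-- Euclidean space ℝ^d. -/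
abbrev Ed (d : ℕ) : Type := EuclideanSpace ℝ (Fin d)

/-- The surface measure on the unit sphere 𝕊^{d-1}. -/
def sphMeasure (d : ℕ) : Measure (Metric.sphere (0 : Ed d) 1) :=
  (volume : Measure (Ed d)).toSphere

/-- The total surface measure |𝕊^{d-1}|. -/
def sphVol (d : ℕ) : ℝ := (sphMeasure d Set.univ).toReal

/-- α = ((q-2)/2)√Λ. -/
def alphaV (q Λ : ℝ) : ℝ := (q - 2) / 2 * Real.sqrt Λ

/-- β = (qΛ/2)^{1/(q-2)}. -/
def betaV (q Λ : ℝ) : ℝ := (q * Λ / 2) ^ (1 / (q - 2))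

/-- The optimizer u(s) = β cosh(αs)^{-2/(q-2)}. -/
def Ufun (q Λ : ℝ) (s : ℝ) : ℝ := betaV q Λ * Real.cosh (alphaV q Λ * s) ^ (-(2 / (q - 2)))

/-- M = (q-1)(q-2)√|𝕊^{d-1}|/(2d). -/
def Mconst (d : ℕ) (q : ℝ) : ℝ := (q - 1) * (q - 2) * Real.sqrt (sphVol d) / (2 * d)

/-- The inhomogeneity f⁽⁰⁾ = M u^{2q-3}. -/
def f0fun (d : ℕ) (q Λ : ℝ) (s : ℝ) : ℝ := Mconst d q * Ufun q Λ s ^ (2 * q - 3)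

/-- The inhomogeneity f⁽²⁾ = M u^{2q-3} √(2(d-1)/(d+2)). -/
def f2fun (d : ℕ) (q Λ : ℝ) (s : ℝ) : ℝ :=
  Mconst d q * Ufun q Λ s ^ (2 * q - 3) * Real.sqrt (2 * ((d : ℝ) - 1) / ((d : ℝ) + 2))

/-- Surrogate for membership in H¹(ℝ). -/
def MemH1R (g : ℝ → ℝ) : Prop :=
  ContDiff ℝ 1 g ∧ Integrable (fun s => g s ^ 2) ∧ Integrable (fun s => deriv g s ^ 2)

/-- The energy functional 𝓔 with damping constant c, zeroth-order coefficient κ and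
inhomogeneity f. -/
def Energy (q Λ c κ : ℝ) (f g : ℝ → ℝ) : ℝ :=
  ∫ s, ((1 - c) * (deriv g s ^ 2 + κ * g s ^ 2) - (q - 1) * Ufun q Λ s ^ (q - 2) * g s ^ 2
    - 2 * f s * g s)

/-- The minimization problem E⁽⁰⁾(ε) in the radial (degree 0) sector, subject to the two
orthogonality constraints. -/
def E0 (d : ℕ) (q Λ ε : ℝ) : ℝ :=
  sInf {r : ℝ | ∃ g : ℝ → ℝ, MemH1R g ∧
    (∫ s, g s * Ufun q Λ s ^ (q - 1)) = 0 ∧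
    (∫ s, g s * Ufun q Λ s ^ (q - 2) * deriv (Ufun q Λ) s) = 0 ∧
    r = Energy q Λ ε Λ (f0fun d q Λ) g}

/-- The minimization problem E⁽²⁾(ε) in the degree 2 sector. -/
def E2 (d : ℕ) (q Λ ε : ℝ) : ℝ :=
  sInf {r : ℝ | ∃ g : ℝ → ℝ, MemH1R g ∧ r = Energy q Λ ε (2 * d + Λ) (f2fun d q Λ) g}

end

/-! ### The space `H¹(ℝ)` -/

/-- `f` belongs to `H¹(ℝ)` with continuous derivative `f'`. -/
structure H1p (f f' : ℝ → ℝ) : Prop where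
  deriv : ∀ s, HasDerivAt f (f' s) s
  cont' : Continuous f'
  sq : Integrable (fun s => f s ^ 2)
  sq' : Integrable (fun s => f' s ^ 2)

theorem H1p.cont {f f' : ℝ → ℝ} (h : H1p f f') : Continuous f :=
  continuous_iff_continuousAt.2 fun s => (h.deriv s).continuousAt

theorem int_of_le {f g : ℝ → ℝ} (hf : Continuous f) (hg : Integrable g)
    (h : ∀ s, |f s| ≤ g s) : Integrable f :=
  hg.mono' hf.aestronglyMeasurable (Eventually.of_forall h)

theorem int_mul_of_sq {f g : ℝ → ℝ} (hf : Continuous f) (hg : Continuous g)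
    (hf2 : Integrable (fun s => f s ^ 2)) (hg2 : Integrable (fun s => g s ^ 2)) :
    Integrable (fun s => f s * g s) := by
  refine int_of_le (hf.mul hg) (hf2.add hg2) fun s => ?_
  simp only [Pi.add_apply]
  rw [abs_le]
  constructor <;> nlinarith [sq_nonneg (f s + g s), sq_nonneg (f s - g s), sq_nonneg (f s), sq_nonneg (g s)]

/-- A bounded continuous factor preserves integrability. -/
theorem int_bdd_mul {a f : ℝ → ℝ} (C : ℝ) (ha : Continuous a) (hf : Continuous f)
    (hC : ∀ s, |a s| ≤ C) (hi : Integrable f) : Integrable (fun s => a s * f s) := by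
  refine int_of_le (ha.mul hf) (hi.norm.const_mul C) fun s => ?_
  rw [abs_mul, Real.norm_eq_abs]
  exact mul_le_mul_of_nonneg_right (hC s) (abs_nonneg _)

/-- Functions in `H¹(ℝ)` are bounded: `f²` and its derivative `2ff'` are integrable, so `f² → 0`
at `±∞`. -/
theorem H1p.bdd {f f' : ℝ → ℝ} (h : H1p f f') : ∃ C, ∀ s, |f s| ≤ C := by
  have hd : ∀ s, HasDerivAt (fun s => f s ^ 2) (2 * (f s * f' s)) s := fun s => by
    refine ((h.deriv s).pow 2).congr_deriv ?_
    push_cast; ring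
  have hi : Integrable (fun s => 2 * (f s * f' s)) :=
    (int_mul_of_sq h.cont h.cont' h.sq h.sq').const_mul 2
  have htop : Tendsto (fun s => f s ^ 2) atTop (𝓝 0) :=
    tendsto_zero_of_hasDerivAt_of_integrableOn_Ioi (a := 0) (fun x _ => hd x)
      hi.integrableOn h.sq.integrableOn
  have hbot : Tendsto (fun s => f s ^ 2) atBot (𝓝 0) :=
    tendsto_zero_of_hasDerivAt_of_integrableOn_Iic (a := 0) (fun x _ => hd x)
      hi.integrableOn h.sq.integrableOn
  obtain ⟨a, ha⟩ := eventually_atTop.1 (htop.eventually (gt_mem_nhds one_pos))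
  obtain ⟨b, hb⟩ := eventually_atBot.1 (hbot.eventually (gt_mem_nhds one_pos))
  obtain ⟨C, hC⟩ := (isCompact_Icc (a := b) (b := a)).exists_bound_of_continuousOn h.cont.continuousOn
  refine ⟨max C 1, fun s => ?_⟩
  by_cases h1 : a ≤ s
  · exact le_max_of_le_right ((sq_le_one_iff_abs_le_one _).1 (ha s h1).le)
  by_cases h2 : s ≤ b
  · exact le_max_of_le_right ((sq_le_one_iff_abs_le_one _).1 (hb s h2).le)
  · exact le_max_of_le_left (hC s ⟨by linarith, by linarith⟩)

/-! ### Hyperbolic functions -/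

theorem hasDerivAt_tanh' (s : ℝ) : HasDerivAt tanh (1 - tanh s ^ 2) s := by
  have hc := (cosh_pos s).ne'
  have := (hasDerivAt_sinh s).div (hasDerivAt_cosh s) hc
  have e : tanh = sinh / cosh := by ext x; simp [tanh_eq_sinh_div_cosh]
  rw [e]
  refine this.congr_deriv ?_
  simp only [Pi.div_apply]
  field_simp

theorem one_sub_tanh_sq (s : ℝ) : 1 - tanh s ^ 2 = (cosh s)⁻¹ ^ 2 := by
  have hc := (cosh_pos s).ne'
  rw [tanh_eq_sinh_div_cosh]
  field_simp
  nlinarith [cosh_sq s]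

theorem continuous_tanh' : Continuous tanh :=
  continuous_iff_continuousAt.2 fun s => (hasDerivAt_tanh' s).continuousAt

theorem sech_pos (s : ℝ) : 0 < (cosh s)⁻¹ := inv_pos.2 (cosh_pos s)

theorem sech_le_one (s : ℝ) : (cosh s)⁻¹ ≤ 1 := inv_le_one_of_one_le₀ (one_le_cosh s)

theorem continuous_sech : Continuous fun s => (cosh s)⁻¹ :=
  continuous_cosh.inv₀ fun s => (cosh_pos s).ne'

theorem hasDerivAt_sech (s : ℝ) :
    HasDerivAt (fun s => (cosh s)⁻¹) (-(tanh s * (cosh s)⁻¹)) s := by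
  have hc := (cosh_pos s).ne'
  refine ((hasDerivAt_cosh s).inv hc).congr_deriv ?_
  rw [tanh_eq_sinh_div_cosh]
  field_simp

theorem hasDerivAt_cosh_rpow (r s : ℝ) :
    HasDerivAt (fun s => cosh s ^ r) (r * tanh s * cosh s ^ r) s := by
  have hc := cosh_pos s
  convert (hasDerivAt_cosh s).rpow_const (p := r) (Or.inl hc.ne') using 1
  rw [rpow_sub_one hc.ne', tanh_eq_sinh_div_cosh]
  field_simp

theorem continuous_cosh_rpow (r : ℝ) : Continuous fun s => cosh s ^ r :=
  continuous_iff_continuousAt.2 fun s => (hasDerivAt_cosh_rpow r s).continuousAt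

theorem exp_abs_le_cosh (s : ℝ) : exp |s| ≤ 2 * cosh s := by
  rw [← cosh_abs, cosh_eq]
  have := exp_pos (-|s|)
  linarith

theorem cosh_le_exp_abs_self (s : ℝ) : cosh s ≤ exp |s| := by
  rw [← cosh_abs, cosh_eq]
  have : exp (-|s|) ≤ exp |s| := exp_le_exp.2 (by linarith [abs_nonneg s])
  linarith

theorem cosh_rpow_neg_le {r : ℝ} (hr : 0 ≤ r) (s : ℝ) :
    cosh s ^ (-r) ≤ 2 ^ r * exp (-r * |s|) := by
  have h1 : exp |s| / 2 ≤ cosh s := by linarith [exp_abs_le_cosh s]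
  have h2 : 0 < exp |s| / 2 := by positivity
  have := rpow_le_rpow_of_nonpos h2 h1 (neg_nonpos.2 hr)
  refine this.trans_eq ?_
  rw [div_rpow (exp_pos _).le (by norm_num), ← exp_mul, rpow_neg (by norm_num)]
  field_simp

theorem cosh_rpow_le {r : ℝ} (hr : 0 ≤ r) (s : ℝ) : cosh s ^ r ≤ exp (r * |s|) := by
  refine (rpow_le_rpow (cosh_pos s).le (cosh_le_exp_abs_self s) hr).trans_eq ?_
  rw [← exp_mul, mul_comm]

theorem integrable_exp_neg_mul_abs {r : ℝ} (hr : 0 < r) :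
    Integrable fun s : ℝ => exp (-r * |s|) := by
  rw [← integrableOn_univ, ← Set.Iic_union_Ioi (a := (0:ℝ)), integrableOn_union]
  constructor
  · refine (integrableOn_exp_mul_Iic hr 0).congr_fun (fun s hs => ?_) measurableSet_Iic
    simp only [abs_of_nonpos hs.out]; ring_nf
  · refine (integrableOn_exp_mul_Ioi (a := -r) (by linarith) 0).congr_fun (fun s hs => ?_)
      measurableSet_Ioi
    simp only [abs_of_pos hs.out]

theorem integrable_cosh_rpow {r : ℝ} (hr : 0 < r) : Integrable fun s : ℝ => cosh s ^ (-r) := by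
  refine int_of_le (continuous_cosh_rpow _) ((integrable_exp_neg_mul_abs hr).const_mul (2 ^ r))
    fun s => ?_
  rw [abs_of_pos (rpow_pos_of_pos (cosh_pos s) _)]
  exact cosh_rpow_neg_le hr.le s

/-! ### The ladder and the third weighted eigenvalue -/

/-- Completing the square with the first order operator `∂ + b tanh`. -/
theorem square_identity {h h' : ℝ → ℝ} (H : H1p h h') (b : ℝ) :
    ∫ s, (h' s + b * tanh s * h s) ^ 2 =
      (∫ s, (h' s ^ 2 + b ^ 2 * h s ^ 2)) - b * (b + 1) * ∫ s, (cosh s)⁻¹ ^ 2 * h s ^ 2 := by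
  have ct := continuous_tanh'
  have bt : ∀ s, |tanh s| ≤ 1 := fun s => (abs_tanh_lt_one s).le
  have i1 : Integrable fun s => (cosh s)⁻¹ ^ 2 * h s ^ 2 :=
    int_bdd_mul 1 (continuous_sech.pow 2) (H.cont.pow 2)
      (fun s => by
        rw [abs_of_nonneg (by positivity)]
        exact pow_le_one₀ (sech_pos s).le (sech_le_one s)) H.sq
  have i2 : Integrable fun s => tanh s * (h s * h' s) :=
    int_bdd_mul 1 ct (H.cont.mul H.cont') bt (int_mul_of_sq H.cont H.cont' H.sq H.sq')
  have i3 : Integrable fun s => tanh s * h s ^ 2 := int_bdd_mul 1 ct (H.cont.pow 2) bt H.sq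
  have z : ∫ s, ((cosh s)⁻¹ ^ 2 * h s ^ 2 + 2 * (tanh s * (h s * h' s))) = 0 := by
    refine integral_eq_zero_of_hasDerivAt_of_integrable (f := fun s => tanh s * h s ^ 2)
      (fun s => ?_) (i1.add (i2.const_mul 2)) i3
    refine ((hasDerivAt_tanh' s).mul ((H.deriv s).pow 2)).congr_deriv ?_
    rw [one_sub_tanh_sq]
    push_cast; simp only [Pi.pow_apply]; ring
  have i4 : Integrable fun s => h' s ^ 2 + b ^ 2 * h s ^ 2 := H.sq'.add (H.sq.const_mul _)
  have i5 : Integrable fun s => (cosh s)⁻¹ ^ 2 * h s ^ 2 + 2 * (tanh s * (h s * h' s)) :=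
    i1.add (i2.const_mul 2)
  have e : ∀ s, (h' s + b * tanh s * h s) ^ 2 = (h' s ^ 2 + b ^ 2 * h s ^ 2)
      - b * (b + 1) * ((cosh s)⁻¹ ^ 2 * h s ^ 2)
      + b * ((cosh s)⁻¹ ^ 2 * h s ^ 2 + 2 * (tanh s * (h s * h' s))) := fun s => by
    rw [← one_sub_tanh_sq]; ring
  have i6 : Integrable fun s => (h' s ^ 2 + b ^ 2 * h s ^ 2)
      - b * (b + 1) * ((cosh s)⁻¹ ^ 2 * h s ^ 2) := i4.sub (i1.const_mul _)
  simp_rw [e]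
  rw [integral_add i6 (i5.const_mul _),
    integral_sub i4 (i1.const_mul _), integral_const_mul, integral_const_mul, z]
  ring

/-- The primitive from `-∞` of an integrable continuous function of mean zero that is bounded by
`K exp(-r|s|)` obeys a bound of the same type. -/
theorem primitive_decay {φ : ℝ → ℝ} (hφ : Continuous φ) (hi : Integrable φ) (h0 : ∫ s, φ s = 0)
    {K r : ℝ} (hr : 0 < r) (hb : ∀ s, |φ s| ≤ K * exp (-r * |s|)) :
    ∃ F : ℝ → ℝ, (∀ s, HasDerivAt F (φ s) s) ∧ ∀ s, |F s| ≤ K / r * exp (-r * |s|) := by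
  refine ⟨fun s => ∫ t in Set.Iic s, φ t, fun s => ?_, fun s => ?_⟩
  · have e : (fun s => ∫ t in Set.Iic s, φ t) =
        fun s => (∫ t in Set.Iic (0:ℝ), φ t) + ∫ t in (0:ℝ)..s, φ t := by
      ext s
      rw [← intervalIntegral.integral_Iic_sub_Iic hi.integrableOn hi.integrableOn]
      ring
    rw [e]
    exact (intervalIntegral.integral_hasDerivAt_right (hφ.intervalIntegrable _ _)
      (hφ.stronglyMeasurableAtFilter _ _) hφ.continuousAt).const_add _
  · rcases le_total s 0 with hs | hs
    · have h1 : ‖∫ t in Set.Iic s, φ t‖ ≤ ∫ t in Set.Iic s, K * exp (r * t) := by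
        refine norm_integral_le_of_norm_le ((integrableOn_exp_mul_Iic hr s).const_mul K) ?_
        refine (ae_restrict_iff' measurableSet_Iic).2 (Eventually.of_forall fun t ht => ?_)
        have := hb t
        rw [abs_of_nonpos (ht.out.trans hs)] at this
        simpa using this
      rw [integral_const_mul, integral_exp_mul_Iic hr] at h1
      rw [← Real.norm_eq_abs, abs_of_nonpos hs]
      refine h1.trans_eq ?_
      rw [show -r * -s = r * s by ring]; ring
    · have h1 : ‖∫ t in Set.Ioi s, φ t‖ ≤ ∫ t in Set.Ioi s, K * exp (-r * t) := by
        refine norm_integral_le_of_norm_le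
          ((integrableOn_exp_mul_Ioi (neg_lt_zero.2 hr) s).const_mul K) ?_
        refine (ae_restrict_iff' measurableSet_Ioi).2 (Eventually.of_forall fun t ht => ?_)
        have := hb t
        rw [abs_of_nonneg (hs.trans ht.out.le)] at this
        simpa using this
      rw [integral_const_mul, integral_exp_mul_Ioi (neg_lt_zero.2 hr)] at h1
      have h2 := intervalIntegral.integral_Iic_add_Ioi (b := s) (f := φ) (μ := volume)
        hi.integrableOn hi.integrableOn
      have h3 : ∫ t in Set.Iic s, φ t = -∫ t in Set.Ioi s, φ t := by linarith
      beta_reduce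
      rw [h3, ← Real.norm_eq_abs, norm_neg, abs_of_nonneg hs]
      refine h1.trans_eq ?_
      field_simp

/-- The ladder step `c ↦ c + 1`: if `h` is orthogonal to the weighted ground state, then
`m' - (c+1) tanh m = sech h` has a solution in `H¹`, given by
`m = cosh^{c+1} ∫_{-∞}^s h sech^{c+2}`. Orthogonality of `h` to the second weighted state becomes
orthogonality of `m` to the ground state at level `c + 1`. -/
theorem ladder_exists {h h' : ℝ → ℝ} (H : H1p h h') {c : ℝ} (hc : 0 ≤ c)
    (h0 : ∫ s, h s * cosh s ^ (-(c + 2)) = 0) :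
    ∃ m m' : ℝ → ℝ, H1p m m' ∧ (∀ s, m' s - (c + 1) * tanh s * m s = (cosh s)⁻¹ * h s) ∧
      ((∫ s, h s * cosh s ^ (-(c + 2)) * tanh s = 0) →
        ∫ s, m s * cosh s ^ (-(c + 1 + 2)) = 0) := by
  obtain ⟨C, hC⟩ := H.bdd
  have hr : 0 < c + 2 := by linarith
  have hC0 : 0 ≤ C := (abs_nonneg _).trans (hC 0)
  have cW := continuous_cosh_rpow (-(c + 2))
  have cφ : Continuous fun s => h s * cosh s ^ (-(c + 2)) := H.cont.mul cW
  have iφ : Integrable fun s => h s * cosh s ^ (-(c + 2)) :=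
    int_bdd_mul C H.cont cW hC (integrable_cosh_rpow hr)
  obtain ⟨F, hF, bF⟩ := primitive_decay (K := C * 2 ^ (c + 2)) cφ iφ h0 hr
    (fun s => by
      rw [abs_mul, abs_of_pos (rpow_pos_of_pos (cosh_pos s) _), mul_assoc]
      exact mul_le_mul (hC s) (cosh_rpow_neg_le hr.le s)
        (rpow_pos_of_pos (cosh_pos s) _).le hC0)
  set K := C * 2 ^ (c + 2) / (c + 2) with hK
  have hK0 : 0 ≤ K := by positivity
  have cF : Continuous F := continuous_iff_continuousAt.2 fun s => (hF s).continuousAt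
  have mderiv : ∀ s, HasDerivAt (fun s => cosh s ^ (c + 1) * F s)
      ((c + 1) * tanh s * (cosh s ^ (c + 1) * F s) + (cosh s)⁻¹ * h s) s := fun s => by
    refine ((hasDerivAt_cosh_rpow (c + 1) s).mul (hF s)).congr_deriv ?_
    have : cosh s ^ (c + 1) * cosh s ^ (-(c + 2)) = (cosh s)⁻¹ := by
      rw [← rpow_add (cosh_pos s), ← rpow_neg_one]; ring_nf
    rw [← this]; ring
  have cm : Continuous fun s => cosh s ^ (c + 1) * F s := (continuous_cosh_rpow _).mul cF
  have cm' : Continuous fun s =>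
      (c + 1) * tanh s * (cosh s ^ (c + 1) * F s) + (cosh s)⁻¹ * h s :=
    ((continuous_const.mul continuous_tanh').mul cm).add (continuous_sech.mul H.cont)
  have bm : ∀ s, |cosh s ^ (c + 1) * F s| ≤ K * exp (-1 * |s|) := fun s => by
    rw [abs_mul, abs_of_pos (rpow_pos_of_pos (cosh_pos s) _)]
    calc cosh s ^ (c + 1) * |F s| ≤ exp ((c + 1) * |s|) * (K * exp (-(c + 2) * |s|)) :=
          mul_le_mul (cosh_rpow_le (by linarith) s) (bF s) (abs_nonneg _) (exp_pos _).le
      _ = K * exp (-1 * |s|) := by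
          rw [mul_left_comm, ← exp_add]; ring_nf
  have sqm : Integrable fun s => (cosh s ^ (c + 1) * F s) ^ 2 := by
    refine int_of_le (cm.pow 2)
      ((integrable_exp_neg_mul_abs (r := 2) (by norm_num)).const_mul (K ^ 2)) fun s => ?_
    rw [abs_pow]
    refine (pow_le_pow_left₀ (abs_nonneg _) (bm s) 2).trans_eq ?_
    rw [mul_pow, ← exp_nat_mul]; push_cast; ring_nf
  have sqm' : Integrable fun s =>
      ((c + 1) * tanh s * (cosh s ^ (c + 1) * F s) + (cosh s)⁻¹ * h s) ^ 2 := by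
    refine int_of_le (cm'.pow 2) ((sqm.const_mul (2 * (c + 1) ^ 2)).add (H.sq.const_mul 2))
      fun s => ?_
    simp only [Pi.add_apply]
    rw [abs_of_nonneg (sq_nonneg _)]
    have a1 := (tanh_sq_lt_one s).le
    have a2 : (cosh s)⁻¹ ^ 2 ≤ 1 := pow_le_one₀ (sech_pos s).le (sech_le_one s)
    set m := cosh s ^ (c + 1) * F s
    have b1 : (tanh s) ^ 2 * ((c + 1) * m) ^ 2 ≤ 1 * ((c + 1) * m) ^ 2 :=
      mul_le_mul_of_nonneg_right a1 (sq_nonneg _)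
    have b2 : (cosh s)⁻¹ ^ 2 * h s ^ 2 ≤ 1 * h s ^ 2 :=
      mul_le_mul_of_nonneg_right a2 (sq_nonneg _)
    nlinarith [sq_nonneg ((c + 1) * tanh s * m - (cosh s)⁻¹ * h s)]
  refine ⟨_, _, ⟨mderiv, cm', sqm, sqm'⟩, fun s => by ring, fun h1 => ?_⟩
  have e : ∀ s, cosh s ^ (c + 1) * F s * cosh s ^ (-(c + 1 + 2)) = (cosh s)⁻¹ ^ 2 * F s := fun s => by
    have : cosh s ^ (c + 1) * cosh s ^ (-(c + 1 + 2)) = (cosh s)⁻¹ ^ 2 := by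
      rw [← rpow_add (cosh_pos s), ← rpow_neg_one, ← rpow_natCast, ← rpow_mul (cosh_pos s).le]
      push_cast; ring_nf
    rw [← this]; ring
  simp_rw [e]
  have iF : Integrable F := int_of_le cF ((integrable_exp_neg_mul_abs hr).const_mul K) bF
  have i1 : Integrable fun s => (cosh s)⁻¹ ^ 2 * F s :=
    int_bdd_mul 1 (continuous_sech.pow 2) cF (fun s => by
        rw [abs_of_nonneg (by positivity)]
        exact pow_le_one₀ (sech_pos s).le (sech_le_one s)) iF
  have bt : ∀ s, |tanh s| ≤ 1 := fun s => (abs_tanh_lt_one s).le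
  have i2 : Integrable fun s => h s * cosh s ^ (-(c + 2)) * tanh s := by
    simpa only [mul_comm] using int_bdd_mul 1 continuous_tanh' cφ bt iφ
  have i3 : Integrable fun s => tanh s * F s := int_bdd_mul 1 continuous_tanh' cF bt iF
  have z : ∫ s, ((cosh s)⁻¹ ^ 2 * F s + h s * cosh s ^ (-(c + 2)) * tanh s) = 0 := by
    refine integral_eq_zero_of_hasDerivAt_of_integrable (f := fun s => tanh s * F s)
      (fun s => ?_) (i1.add i2) i3
    refine ((hasDerivAt_tanh' s).mul (hF s)).congr_deriv ?_
    rw [one_sub_tanh_sq]; ring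
  rw [integral_add i1 i2, h1, add_zero] at z
  exact z

/-- A weighted lower bound at level `c + 1` passes to level `c` through the ladder step. -/
theorem ladder_bound {h h' m m' : ℝ → ℝ} (H : H1p h h') (Hm : H1p m m') {c ν : ℝ}
    (hν : c * (c + 1) ≤ ν) (hm : ∀ s, m' s - (c + 1) * tanh s * m s = (cosh s)⁻¹ * h s)
    (hb : ν * ∫ s, (cosh s)⁻¹ ^ 2 * m s ^ 2 ≤ ∫ s, (m' s ^ 2 + (c + 1) ^ 2 * m s ^ 2)) :
    ν * ∫ s, (cosh s)⁻¹ ^ 2 * h s ^ 2 ≤ ∫ s, (h' s ^ 2 + c ^ 2 * h s ^ 2) := by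
  have bs : ∀ s, |(cosh s)⁻¹| ≤ 1 := fun s => by
    rw [abs_of_pos (sech_pos s)]; exact sech_le_one s
  have bs2 : ∀ s, |(cosh s)⁻¹ ^ 2| ≤ 1 := fun s => by
    rw [abs_pow]; exact pow_le_one₀ (abs_nonneg _) (bs s)
  have bt : ∀ s, |tanh s| ≤ 1 := fun s => (abs_tanh_lt_one s).le
  have iN : Integrable fun s => (cosh s)⁻¹ ^ 2 * h s ^ 2 :=
    int_bdd_mul 1 (continuous_sech.pow 2) (H.cont.pow 2) bs2 H.sq
  have iK : Integrable fun s => (cosh s)⁻¹ ^ 2 * m s ^ 2 :=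
    int_bdd_mul 1 (continuous_sech.pow 2) (Hm.cont.pow 2) bs2 Hm.sq
  have hN := square_identity Hm (-(c + 1))
  have hR := square_identity H c
  have e1 : ∀ s, (m' s + -(c + 1) * tanh s * m s) ^ 2 = (cosh s)⁻¹ ^ 2 * h s ^ 2 := fun s => by
    rw [← mul_pow, ← hm s]; ring
  simp_rw [e1] at hN
  have cA : Continuous fun s => h' s + c * tanh s * h s :=
    H.cont'.add ((continuous_const.mul continuous_tanh').mul H.cont)
  have iR : Integrable fun s => (h' s + c * tanh s * h s) ^ 2 := by
    have j1 : Integrable fun s => h' s ^ 2 + c ^ 2 * h s ^ 2 := H.sq'.add (H.sq.const_mul _)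
    refine int_of_le (cA.pow 2) (j1.const_mul 2) fun s => ?_
    rw [abs_of_nonneg (sq_nonneg _)]
    have a1 := (tanh_sq_lt_one s).le
    have b1 : (tanh s) ^ 2 * (c * h s) ^ 2 ≤ 1 * (c * h s) ^ 2 :=
      mul_le_mul_of_nonneg_right a1 (sq_nonneg _)
    nlinarith [sq_nonneg (c * tanh s * h s - h' s)]
  have iab : Integrable fun s => (cosh s)⁻¹ * (m s * (h' s + c * tanh s * h s)) :=
    int_bdd_mul 1 continuous_sech (Hm.cont.mul cA) bs (int_mul_of_sq Hm.cont cA Hm.sq iR)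
  have ihm : Integrable fun s => (cosh s)⁻¹ * (h s * m s) :=
    int_bdd_mul 1 continuous_sech (H.cont.mul Hm.cont) bs (int_mul_of_sq H.cont Hm.cont H.sq Hm.sq)
  have z : ∫ s, ((cosh s)⁻¹ ^ 2 * h s ^ 2 + (cosh s)⁻¹ * (m s * (h' s + c * tanh s * h s))) = 0 := by
    refine integral_eq_zero_of_hasDerivAt_of_integrable (f := fun s => (cosh s)⁻¹ * (h s * m s))
      (fun s => ?_) (iN.add iab) ihm
    refine ((hasDerivAt_sech s).mul ((H.deriv s).mul (Hm.deriv s))).congr_deriv ?_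
    have := hm s
    have e : m' s = (c + 1) * tanh s * m s + (cosh s)⁻¹ * h s := by linarith
    simp only [Pi.mul_apply]
    rw [e]; ring
  rw [integral_add iN iab] at z
  set μ := ν - c * (c + 1) with hμ
  have pos : 0 ≤ ∫ s, ((h' s + c * tanh s * h s) ^ 2 +
      2 * μ * ((cosh s)⁻¹ * (m s * (h' s + c * tanh s * h s))) +
      μ ^ 2 * ((cosh s)⁻¹ ^ 2 * m s ^ 2)) := by
    refine integral_nonneg fun s => ?_
    have : 0 ≤ ((h' s + c * tanh s * h s) + μ * ((cosh s)⁻¹ * m s)) ^ 2 := sq_nonneg _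
    simp only [Pi.zero_apply]
    nlinarith
  have i6 : Integrable fun s => (h' s + c * tanh s * h s) ^ 2 +
      2 * μ * ((cosh s)⁻¹ * (m s * (h' s + c * tanh s * h s))) := iR.add (iab.const_mul _)
  rw [integral_add i6 (iK.const_mul _), integral_add iR (iab.const_mul _), integral_const_mul,
    integral_const_mul] at pos
  simp only [neg_sq] at hN
  set N := ∫ s, (cosh s)⁻¹ ^ 2 * h s ^ 2
  set K := ∫ s, (cosh s)⁻¹ ^ 2 * m s ^ 2
  set R := ∫ s, (h' s + c * tanh s * h s) ^ 2
  set X := ∫ s, (cosh s)⁻¹ * (m s * (h' s + c * tanh s * h s))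
  have hμ0 : 0 ≤ μ := by linarith
  have hNK : μ * K ≤ N := by rw [hμ]; nlinarith
  have hX : X = -N := by linarith
  rw [hX] at pos
  nlinarith [mul_le_mul_of_nonneg_left hNK hμ0]

/-- The sharp bound for functions orthogonal to the first two weighted eigenfunctions of
`-∂² + c²` with weight `sech²`: the third eigenvalue is `(c+2)(c+3)`. -/
theorem third_eigenvalue_bound {h h' : ℝ → ℝ} (H : H1p h h') {c : ℝ} (hc : 0 ≤ c)
    (h0 : ∫ s, h s * cosh s ^ (-(c + 2)) = 0)
    (h1 : ∫ s, h s * cosh s ^ (-(c + 2)) * tanh s = 0) :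
    (c + 2) * (c + 3) * ∫ s, (cosh s)⁻¹ ^ 2 * h s ^ 2 ≤ ∫ s, (h' s ^ 2 + c ^ 2 * h s ^ 2) := by
  obtain ⟨m, m', Hm, hm, om⟩ := ladder_exists H hc h0
  obtain ⟨n, n', Hn, hn, -⟩ := ladder_exists Hm (by linarith : 0 ≤ c + 1) (om h1)
  refine ladder_bound H Hm (by nlinarith) hm ?_
  refine ladder_bound Hm Hn (by nlinarith) hn ?_
  have := square_identity Hn (c + 1 + 1)
  have p : 0 ≤ ∫ s, (n' s + (c + 1 + 1) * tanh s * n s) ^ 2 := integral_nonneg fun s => sq_nonneg _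
  rw [show (c + 2) * (c + 3) = (c + 1 + 1) * (c + 1 + 1 + 1) by ring]
  linarith

/-! ### The Beta integral -/

/-- The Beta integral in hyperbolic form, from `B(k, k)` by the logistic substitution and the
duplication formula. -/
theorem integral_cosh_rpow {k : ℝ} (hk : 0 < k) :
    ∫ s, cosh s ^ (-(2 * k)) = Gamma k * √π / Gamma (k + 1 / 2) := by
  have hB : ∫ x in Set.Ioo (0:ℝ) 1, x ^ (k - 1) * (1 - x) ^ (k - 1)
      = Gamma k * Gamma k / Gamma (k + k) := by
    change _ = ProbabilityTheory.beta k k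
    rw [ProbabilityTheory.beta_eq_betaIntegralReal k k hk hk,
      Complex.betaIntegral, intervalIntegral.integral_of_le (by norm_num),
      ← integral_Ioc_eq_integral_Ioo, ← RCLike.re_to_complex, ← integral_re]
    · refine setIntegral_congr_fun measurableSet_Ioc fun x ⟨hx1, hx₂⟩ ↦ ?_
      norm_cast
      rw [← Complex.ofReal_cpow, ← Complex.ofReal_cpow, RCLike.re_to_complex,
        Complex.re_mul_ofReal, Complex.ofReal_re]
      all_goals linarith
    convert! Complex.betaIntegral_convergent (u := k) (v := k) (by simpa) (by simpa)
    rw [intervalIntegrable_iff_integrableOn_Ioc_of_le (by simp), IntegrableOn]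
  have hS := integral_image_eq_integral_abs_deriv_smul (s := Set.univ) MeasurableSet.univ
    (fun x _ => (hasDerivAt_sigmoid x).hasDerivWithinAt) sigmoid_injective.injOn
    (fun x => x ^ (k - 1) * (1 - x) ^ (k - 1))
  rw [Set.image_univ, range_sigmoid, hB, Measure.restrict_univ] at hS
  have e : ∀ x, |sigmoid x * (1 - sigmoid x)| • (sigmoid x ^ (k - 1) * (1 - sigmoid x) ^ (k - 1))
      = 4 ^ (-k) * cosh (2⁻¹ * x) ^ (-(2 * k)) := fun x => by
    have h1 := sigmoid_pos x
    have h2 : 0 < 1 - sigmoid x := by linarith [sigmoid_lt_one x]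
    have h3 : sigmoid x * (1 - sigmoid x) = (4 * cosh (2⁻¹ * x) ^ 2)⁻¹ := by
      have hx : exp (-x) = exp (-(2⁻¹ * x)) ^ 2 := by rw [← exp_nat_mul]; push_cast; ring_nf
      have hy : exp (2⁻¹ * x) = (exp (-(2⁻¹ * x)))⁻¹ := by rw [exp_neg, inv_inv]
      rw [sigmoid_def, cosh_eq, hx, hy]
      have := exp_pos (-(2⁻¹ * x))
      field_simp
      ring
    rw [abs_of_pos (mul_pos h1 h2), smul_eq_mul, ← mul_rpow h1.le h2.le,
      rpow_sub_one (mul_pos h1 h2).ne', mul_div_cancel₀ _ (mul_pos h1 h2).ne', h3,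
      ← rpow_neg_one, ← rpow_mul (by positivity), mul_rpow (by norm_num) (by positivity),
      ← rpow_natCast, ← rpow_mul (cosh_pos _).le]
    norm_num
  simp_rw [e] at hS
  rw [integral_const_mul, Measure.integral_comp_mul_left (fun x => cosh x ^ (-(2 * k)))] at hS
  have hdup := Gamma_mul_Gamma_add_half k
  have g1 := Gamma_pos_of_pos hk
  have g2 : 0 < Gamma (k + 1 / 2) := Gamma_pos_of_pos (by linarith)
  have g3 : 0 < Gamma (2 * k) := Gamma_pos_of_pos (by linarith)
  rw [show k + k = 2 * k by ring] at hS
  have h4 : (2:ℝ) ^ (1 - 2 * k) = 2 * 4 ^ (-k) := by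
    rw [sub_eq_add_neg, rpow_add (by norm_num), rpow_one,
      show (4:ℝ) = 2 ^ (2:ℝ) by norm_num, ← rpow_mul (by norm_num)]
    ring_nf
  have h5 : (0:ℝ) < 4 ^ (-k) := by positivity
  rw [h4] at hdup
  norm_num at hS
  rw [eq_div_iff g2.ne']
  rw [div_eq_iff g3.ne'] at hS
  have : Gamma k * (4 ^ (-k) * 2 * Gamma (2 * k)) *
      ((∫ s, cosh s ^ (-(2 * k))) * Gamma (k + 1 / 2)) =
      Gamma k * (4 ^ (-k) * 2 * Gamma (2 * k)) * (Gamma k * √π) := by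
    calc _ = (Gamma k * Gamma (k + 1 / 2)) *
          (4 ^ (-k) * (2 * ∫ s, cosh s ^ (-(2 * k))) * Gamma (2 * k)) := by ring
      _ = _ := by rw [← hS, hdup]; ring
  exact mul_left_cancel₀ (by positivity) this

/-! ### The profile `u` -/

section Profile

variable {q Λ : ℝ}

theorem alphaV_pos (hq : 2 < q) (hΛ : 0 < Λ) : 0 < alphaV q Λ := by
  have : 0 < q - 2 := by linarith
  unfold alphaV; positivity

theorem betaV_pos (hq : 2 < q) (hΛ : 0 < Λ) : 0 < betaV q Λ := by
  have : 0 < q := by linarith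
  unfold betaV; positivity

theorem Ufun_pos (hq : 2 < q) (hΛ : 0 < Λ) (s : ℝ) : 0 < Ufun q Λ s :=
  mul_pos (betaV_pos hq hΛ) (rpow_pos_of_pos (cosh_pos _) _)

theorem Ufun_rpow (hq : 2 < q) (hΛ : 0 < Λ) (p s : ℝ) :
    Ufun q Λ s ^ p = betaV q Λ ^ p * cosh (alphaV q Λ * s) ^ (-(p * (2 / (q - 2)))) := by
  unfold Ufun
  rw [mul_rpow (betaV_pos hq hΛ).le (rpow_pos_of_pos (cosh_pos _) _).le,
    ← rpow_mul (cosh_pos _).le]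
  ring_nf

theorem hasDerivAt_Ufun_rpow (hq : 2 < q) (hΛ : 0 < Λ) (p s : ℝ) :
    HasDerivAt (fun s => Ufun q Λ s ^ p)
      (-(p * √Λ * (tanh (alphaV q Λ * s) * Ufun q Λ s ^ p))) s := by
  simp_rw [Ufun_rpow hq hΛ]
  have hl : HasDerivAt (fun s => alphaV q Λ * s) (alphaV q Λ) s := by
    simpa using (hasDerivAt_id s).const_mul (alphaV q Λ)
  refine (((hasDerivAt_cosh_rpow (-(p * (2 / (q - 2)))) (alphaV q Λ * s)).comp s hl).const_mul
    (betaV q Λ ^ p)).congr_deriv ?_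
  have : q - 2 ≠ 0 := by linarith
  have e : 2 / (q - 2) * alphaV q Λ = √Λ := by unfold alphaV; field_simp
  rw [← e]; ring

theorem Ufun_rpow_sub_two (hq : 2 < q) (hΛ : 0 < Λ) (s : ℝ) :
    Ufun q Λ s ^ (q - 2) = q * Λ / 2 * (1 - tanh (alphaV q Λ * s) ^ 2) := by
  have h2 : q - 2 ≠ 0 := by linarith
  have : 0 ≤ q * Λ / 2 := by nlinarith
  rw [Ufun_rpow hq hΛ, one_sub_tanh_sq, betaV, ← rpow_mul this, ← rpow_neg_one, ← rpow_natCast,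
    ← rpow_mul (cosh_pos _).le]
  rw [show 1 / (q - 2) * (q - 2) = 1 by field_simp, rpow_one,
    show -((q - 2) * (2 / (q - 2))) = -1 * ((2 : ℕ) : ℝ) by field_simp; norm_num]

/-- The second derivative of `u^p`, computed from `u'² = Λu² - (2/q)u^q`. -/
theorem hasDerivAt_deriv_Ufun_rpow (hq : 2 < q) (hΛ : 0 < Λ) (p s : ℝ) :
    HasDerivAt (fun s => -(p * √Λ * (tanh (alphaV q Λ * s) * Ufun q Λ s ^ p)))
      (p ^ 2 * Λ * Ufun q Λ s ^ p - p * ((q + 2 * p - 2) / q) * Ufun q Λ s ^ (p + q - 2)) s := by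
  have hl : HasDerivAt (fun s => alphaV q Λ * s) (alphaV q Λ) s := by
    simpa using (hasDerivAt_id s).const_mul (alphaV q Λ)
  have ht : HasDerivAt (fun s => tanh (alphaV q Λ * s)) _ s :=
    (hasDerivAt_tanh' (alphaV q Λ * s)).comp s hl
  refine (((ht.mul (hasDerivAt_Ufun_rpow hq hΛ p s)).const_mul (p * √Λ)).neg).congr_deriv ?_
  have hs : √Λ * √Λ = Λ := mul_self_sqrt hΛ.le
  have hq0 : q ≠ 0 := by linarith
  rw [show p + q - 2 = p + (q - 2) by ring, rpow_add (Ufun_pos hq hΛ s),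
    Ufun_rpow_sub_two hq hΛ]
  generalize tanh (alphaV q Λ * s) = t
  generalize Ufun q Λ s ^ p = v
  unfold alphaV
  field_simp
  rw [show Λ = √Λ ^ 2 by rw [sq, hs]]
  simp only [sqrt_sq (sqrt_nonneg Λ)]
  ring

theorem continuous_Ufun_rpow (hq : 2 < q) (hΛ : 0 < Λ) (p : ℝ) :
    Continuous fun s => Ufun q Λ s ^ p :=
  continuous_iff_continuousAt.2 fun s => (hasDerivAt_Ufun_rpow hq hΛ p s).continuousAt

theorem integrable_Ufun_rpow (hq : 2 < q) (hΛ : 0 < Λ) {p : ℝ} (hp : 0 < p) :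
    Integrable fun s => Ufun q Λ s ^ p := by
  simp_rw [Ufun_rpow hq hΛ]
  have : 0 < q - 2 := by linarith
  exact ((integrable_cosh_rpow (r := p * (2 / (q - 2))) (by positivity)).comp_mul_left'
    (alphaV_pos hq hΛ).ne').const_mul _

theorem Ufun_rpow_le (hq : 2 < q) (hΛ : 0 < Λ) {p : ℝ} (hp : 0 < p) (s : ℝ) :
    |Ufun q Λ s ^ p| ≤ betaV q Λ ^ p := by
  have : 0 < q - 2 := by linarith
  rw [abs_of_pos (rpow_pos_of_pos (Ufun_pos hq hΛ s) _), Ufun_rpow hq hΛ]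
  refine mul_le_of_le_one_right (rpow_pos_of_pos (betaV_pos hq hΛ) _).le ?_
  exact rpow_le_one_of_one_le_of_nonpos (one_le_cosh _) (neg_nonpos.2 (by positivity))

theorem integral_Ufun_rpow (hq : 2 < q) (hΛ : 0 < Λ) {p : ℝ} (hp : 0 < p) :
    ∫ s, Ufun q Λ s ^ p = betaV q Λ ^ p / alphaV q Λ *
      (Gamma (p / (q - 2)) * √π / Gamma (p / (q - 2) + 1 / 2)) := by
  have : 0 < q - 2 := by linarith
  simp_rw [Ufun_rpow hq hΛ]
  rw [integral_const_mul,
    Measure.integral_comp_mul_left (fun x => cosh x ^ (-(p * (2 / (q - 2))))),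
    show p * (2 / (q - 2)) = 2 * (p / (q - 2)) by ring, integral_cosh_rpow (by positivity),
    abs_of_pos (inv_pos.2 (alphaV_pos hq hΛ)), smul_eq_mul]
  ring

theorem continuous_tanh_alpha : Continuous fun s => tanh (alphaV q Λ * s) :=
  continuous_tanh'.comp (continuous_const.mul continuous_id)

theorem integrable_tanh_Ufun_rpow (hq : 2 < q) (hΛ : 0 < Λ) {p : ℝ} (hp : 0 < p) :
    Integrable fun s => tanh (alphaV q Λ * s) * Ufun q Λ s ^ p :=
  int_bdd_mul 1 continuous_tanh_alpha (continuous_Ufun_rpow hq hΛ p)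
    (fun _ => (abs_tanh_lt_one _).le) (integrable_Ufun_rpow hq hΛ hp)

/-- The recursion between the moments of `u`, from `∫ (u^p)'' = 0`. -/
theorem moment_recursion (hq : 2 < q) (hΛ : 0 < Λ) {p : ℝ} (hp : 0 < p) :
    p * Λ * ∫ s, Ufun q Λ s ^ p = (q + 2 * p - 2) / q * ∫ s, Ufun q Λ s ^ (p + q - 2) := by
  have i1 := integrable_Ufun_rpow hq hΛ hp
  have i2 := integrable_Ufun_rpow hq hΛ (p := p + q - 2) (by linarith)
  have z := integral_eq_zero_of_hasDerivAt_of_integrable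
    (hasDerivAt_deriv_Ufun_rpow hq hΛ p) ((i1.const_mul _).sub (i2.const_mul _))
    ((integrable_tanh_Ufun_rpow hq hΛ hp).const_mul (p * √Λ)).neg
  rw [integral_sub (i1.const_mul _) (i2.const_mul _), integral_const_mul, integral_const_mul] at z
  refine mul_left_cancel₀ hp.ne' ?_
  linarith

theorem integral_odd {f : ℝ → ℝ} (h : ∀ s, f (-s) = -f s) : ∫ s, f s = 0 := by
  have := integral_neg_eq_self f volume
  simp_rw [h, integral_neg] at this
  linarith

theorem deriv_Ufun (hq : 2 < q) (hΛ : 0 < Λ) (s : ℝ) :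
    deriv (Ufun q Λ) s = -(√Λ * (tanh (alphaV q Λ * s) * Ufun q Λ s)) := by
  have := (hasDerivAt_Ufun_rpow hq hΛ 1 s).deriv
  simpa only [rpow_one, one_mul] using this

/-! ### Coercivity -/

theorem MemH1R.H1p {g : ℝ → ℝ} (h : MemH1R g) : H1p g (deriv g) :=
  ⟨fun s => (h.1.differentiable one_ne_zero s).hasDerivAt, h.1.continuous_deriv le_rfl, h.2.1, h.2.2⟩

/-- Coercivity of the linearized operator on the constraint space: rescaling by `α` turns the
constraints into orthogonality to the first two `sech²`-weighted eigenfunctions at level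
`c = 2/(q-2)`, where the potential has coefficient `(c+1)(c+2)`, below the third eigenvalue
`(c+2)(c+3)`. The ratio of the two is `q/(3q-4)`. -/
theorem coercivity (hq : 2 < q) (hΛ : 0 < Λ) {h h' : ℝ → ℝ} (H : H1p h h')
    (h0 : ∫ s, h s * Ufun q Λ s ^ (q - 1) = 0)
    (h1 : ∫ s, h s * Ufun q Λ s ^ (q - 2) * deriv (Ufun q Λ) s = 0) :
    ∫ s, (q - 1) * Ufun q Λ s ^ (q - 2) * h s ^ 2 ≤
      (q / (3 * q - 4)) * ∫ s, (h' s ^ 2 + Λ * h s ^ 2) := by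
  have hq2 : 0 < q - 2 := by linarith
  set a := alphaV q Λ with ha
  have a0 : 0 < a := alphaV_pos hq hΛ
  have b0 := betaV_pos hq hΛ
  set c := 2 / (q - 2) with hc
  have c0 : 0 < c := by positivity
  have hcq : (q - 1) * c = c + 2 := by rw [hc]; field_simp; ring
  have hac : a ^ 2 * c ^ 2 = Λ := by
    rw [ha, hc, alphaV, mul_pow, sq_sqrt hΛ.le]; field_simp
  have eU : ∀ s, Ufun q Λ s ^ (q - 1) = betaV q Λ ^ (q - 1) * cosh (a * s) ^ (-(c + 2)) :=
    fun s => by rw [Ufun_rpow hq hΛ, ← hc, hcq]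
  have scaled : H1p (fun s => h (s / a)) (fun s => h' (s / a) / a) := by
    refine ⟨fun s => ?_, (H.cont'.comp (continuous_id.div_const a)).div_const a,
      H.sq.comp_div a0.ne', ?_⟩
    · have : HasDerivAt (fun s => s / a) (1 / a) s := (hasDerivAt_id s).div_const a
      exact ((H.deriv (s / a)).comp s this).congr_deriv (by ring)
    · simp_rw [div_pow]
      exact (H.sq'.comp_div a0.ne').div_const _
  have o0 : ∫ s, h (s / a) * cosh s ^ (-(c + 2)) = 0 := by
    have := Measure.integral_comp_div (fun s => h s * cosh (a * s) ^ (-(c + 2))) a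
    simp only [mul_div_cancel₀ _ a0.ne'] at this
    rw [this]
    simp_rw [eU, mul_left_comm (h _), integral_const_mul] at h0
    rw [(mul_eq_zero.1 h0).resolve_left (rpow_pos_of_pos b0 _).ne', smul_zero]
  have o1 : ∫ s, h (s / a) * cosh s ^ (-(c + 2)) * tanh s = 0 := by
    have := Measure.integral_comp_div (fun s => h s * cosh (a * s) ^ (-(c + 2)) * tanh (a * s)) a
    simp only [mul_div_cancel₀ _ a0.ne'] at this
    rw [this]
    have e : ∀ s, h s * Ufun q Λ s ^ (q - 2) * deriv (Ufun q Λ) s =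
        (-(√Λ * betaV q Λ ^ (q - 1))) * (h s * cosh (a * s) ^ (-(c + 2)) * tanh (a * s)) :=
      fun s => by
        have e1 := eU s
        rw [show q - 1 = q - 2 + 1 by ring, rpow_add_one (Ufun_pos hq hΛ s).ne',
          show q - 2 + 1 = q - 1 by ring] at e1
        rw [deriv_Ufun hq hΛ]
        linear_combination (-(h s * √Λ * tanh (a * s))) * e1
    simp_rw [e, integral_const_mul] at h1
    rw [(mul_eq_zero.1 h1).resolve_left
      (neg_ne_zero.2 (mul_pos (sqrt_pos.2 hΛ) (rpow_pos_of_pos b0 _)).ne'), smul_zero]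
  have key := third_eigenvalue_bound scaled c0.le o0 o1
  have k1 := Measure.integral_comp_div (fun s => (cosh (a * s))⁻¹ ^ 2 * h s ^ 2) a
  have k2 := Measure.integral_comp_div (fun s => (h' s / a) ^ 2 + c ^ 2 * h s ^ 2) a
  simp only [mul_div_cancel₀ _ a0.ne'] at k1
  rw [k1, k2, abs_of_pos a0, smul_eq_mul, smul_eq_mul] at key
  have e2 : ∀ s, (h' s / a) ^ 2 + c ^ 2 * h s ^ 2 = (a ^ 2)⁻¹ * (h' s ^ 2 + Λ * h s ^ 2) :=
    fun s => by rw [← hac]; field_simp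
  have e3 : ∀ s, (q - 1) * Ufun q Λ s ^ (q - 2) * h s ^ 2 =
      (q - 1) * (q * Λ / 2) * ((cosh (a * s))⁻¹ ^ 2 * h s ^ 2) := fun s => by
    rw [Ufun_rpow_sub_two hq hΛ, one_sub_tanh_sq]; ring
  simp_rw [e2, integral_const_mul] at key
  simp_rw [e3, integral_const_mul]
  generalize (∫ s, (cosh (a * s))⁻¹ ^ 2 * h s ^ 2) = N at key ⊢
  generalize (∫ s, (h' s ^ 2 + Λ * h s ^ 2)) = D at key ⊢
  have key2 : a ^ 2 * ((c + 2) * (c + 3)) * N ≤ D := by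
    have := mul_le_mul_of_nonneg_left key a0.le
    have e4 : a * (a * ((a ^ 2)⁻¹ * D)) = D := by field_simp
    rw [e4] at this
    refine le_trans (le_of_eq ?_) this
    ring
  have e5 : (q - 1) * (q * Λ / 2) = q / (3 * q - 4) * (a ^ 2 * ((c + 2) * (c + 3))) := by
    have : 3 * q - 4 ≠ 0 := by linarith
    have : q * 3 - 4 ≠ 0 := by linarith
    have e6 : c + 3 = (3 * q - 4) / (q - 2) := by rw [hc]; field_simp; ring
    have e7 : c + 2 = 2 * (q - 1) / (q - 2) := by rw [hc]; field_simp; ring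
    rw [← hac, e6, e7, hc]; field_simp
  rw [e5, mul_assoc]
  exact mul_le_mul_of_nonneg_left key2 (div_nonneg (by linarith) (by linarith))

end Profile

/-! ### The minimizer and the energy -/

noncomputable section

section Minimizer

variable {q Λ : ℝ}

theorem H1p.lin {f f' g g' : ℝ → ℝ} (hf : H1p f f') (hg : H1p g g') (a b : ℝ) :
    H1p (fun s => a * f s + b * g s) (fun s => a * f' s + b * g' s) := by
  have key : ∀ u v : ℝ → ℝ, Continuous u → Continuous v → Integrable (fun s => u s ^ 2) →
      Integrable (fun s => v s ^ 2) → Integrable (fun s => (a * u s + b * v s) ^ 2) := by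
    intro u v cu cv iu iv
    have j := ((iu.const_mul (a ^ 2)).add ((int_mul_of_sq cu cv iu iv).const_mul (2 * a * b))).add
      (iv.const_mul (b ^ 2))
    refine j.congr (Eventually.of_forall fun s => ?_)
    simp only [Pi.add_apply]
    ring
  exact ⟨fun s => ((hf.deriv s).const_mul a).add ((hg.deriv s).const_mul b),
    (continuous_const.mul hf.cont').add (continuous_const.mul hg.cont'),
    key _ _ hf.cont hg.cont hf.sq hg.sq, key _ _ hf.cont' hg.cont' hf.sq' hg.sq'⟩

theorem H1p_Ufun_rpow (hq : 2 < q) (hΛ : 0 < Λ) {p : ℝ} (hp : 0 < p) :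
    H1p (fun s => Ufun q Λ s ^ p)
      (fun s => -(p * √Λ * (tanh (alphaV q Λ * s) * Ufun q Λ s ^ p))) := by
  have cU := continuous_Ufun_rpow hq hΛ p
  have c' : Continuous fun s => -(p * √Λ * (tanh (alphaV q Λ * s) * Ufun q Λ s ^ p)) :=
    (continuous_const.mul (continuous_tanh_alpha.mul cU)).neg
  have sq : Integrable fun s => (Ufun q Λ s ^ p) ^ 2 := by
    simp_rw [pow_two]
    exact int_bdd_mul _ cU cU (Ufun_rpow_le hq hΛ hp) (integrable_Ufun_rpow hq hΛ hp)
  refine ⟨hasDerivAt_Ufun_rpow hq hΛ p, c', sq, ?_⟩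
  refine int_of_le (c'.pow 2) (sq.const_mul ((p * √Λ) ^ 2)) fun s => ?_
  rw [abs_of_nonneg (sq_nonneg _), neg_sq, mul_pow (p * √Λ), mul_pow (tanh _)]
  refine mul_le_mul_of_nonneg_left ?_ (sq_nonneg _)
  exact mul_le_of_le_one_left (sq_nonneg _) (tanh_sq_lt_one _).le

/-- The coefficient of `u^{q-1}` in the minimizer at `ε = 0`. -/
def coefA (d : ℕ) (q : ℝ) : ℝ := Mconst d q * q / (2 * (q - 1) * (q - 2))

/-- The coefficient of `u` in the minimizer, fixed by orthogonality to `u^{q-1}` through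
`∫ u^{2q-2} = q²Λ/(3q-2) ∫ u^q`. -/
def coefB (d : ℕ) (q Λ : ℝ) : ℝ := -(coefA d q * (q ^ 2 * Λ / (3 * q - 2)))

/-- The minimizer at `ε = 0`. -/
def gmin (d : ℕ) (q Λ : ℝ) (s : ℝ) : ℝ :=
  coefA d q * Ufun q Λ s ^ (q - 1) + coefB d q Λ * Ufun q Λ s ^ (1 : ℝ)

/-- The derivative of `gmin`. -/
def gmin' (d : ℕ) (q Λ : ℝ) (s : ℝ) : ℝ :=
  coefA d q * -((q - 1) * √Λ * (tanh (alphaV q Λ * s) * Ufun q Λ s ^ (q - 1))) +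
    coefB d q Λ * -(1 * √Λ * (tanh (alphaV q Λ * s) * Ufun q Λ s ^ (1 : ℝ)))

theorem H1p_gmin (d : ℕ) (hq : 2 < q) (hΛ : 0 < Λ) : H1p (gmin d q Λ) (gmin' d q Λ) :=
  (H1p_Ufun_rpow hq hΛ (by linarith : 0 < q - 1)).lin (H1p_Ufun_rpow hq hΛ one_pos) _ _

/-- The Lagrange multiplier of the constraint `g ⊥ u^{q-1}`. -/
def lagr (d : ℕ) (q Λ : ℝ) : ℝ :=
  -(coefA d q * Λ * q * (q - 2)) - coefB d q Λ * (q - 2)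

/-- The Euler–Lagrange equation of the constrained problem at `ε = 0`. -/
theorem hasDerivAt_gmin' (d : ℕ) (hq : 2 < q) (hΛ : 0 < Λ) (s : ℝ) :
    HasDerivAt (gmin' d q Λ) (Λ * gmin d q Λ s - (q - 1) * Ufun q Λ s ^ (q - 2) * gmin d q Λ s
      - f0fun d q Λ s - lagr d q Λ * Ufun q Λ s ^ (q - 1)) s := by
  refine (((hasDerivAt_deriv_Ufun_rpow hq hΛ (q - 1) s).const_mul (coefA d q)).add
    ((hasDerivAt_deriv_Ufun_rpow hq hΛ 1 s).const_mul (coefB d q Λ))).congr_deriv ?_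
  have hU := Ufun_pos hq hΛ s
  have e1 : Ufun q Λ s ^ (1 + q - 2) = Ufun q Λ s ^ (q - 1) := by ring_nf
  have e2 : Ufun q Λ s ^ (q - 1 + q - 2) = Ufun q Λ s ^ (2 * q - 3) := by ring_nf
  have e3 : Ufun q Λ s ^ (q - 2) * Ufun q Λ s ^ (q - 1) = Ufun q Λ s ^ (2 * q - 3) := by
    rw [← rpow_add hU]; ring_nf
  have e4 : Ufun q Λ s ^ (q - 2) * Ufun q Λ s ^ (1 : ℝ) = Ufun q Λ s ^ (q - 1) := by
    rw [← rpow_add hU]; ring_nf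
  have h1 : q - 1 ≠ 0 := by linarith
  have h2 : q - 2 ≠ 0 := by linarith
  have h3 : q ≠ 0 := by linarith
  have hM : Mconst d q = coefA d q * (2 * (q - 1) * (q - 2) / q) := by
    unfold coefA; field_simp
  rw [e1, e2]
  unfold gmin f0fun lagr
  rw [hM, show (q + 2 * 1 - 2) / q = 1 by field_simp; ring]
  have e5 : (q + 2 * (q - 1) - 2) / q = 1 + 2 * (q - 2) / q := by field_simp; ring
  rw [e5]
  linear_combination (q - 1) * coefA d q * e3 + (q - 1) * coefB d q Λ * e4

/-- The constraint `gmin ⊥ u^{q-1}`. -/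
theorem gmin_orth (d : ℕ) (hq : 2 < q) (hΛ : 0 < Λ) :
    ∫ s, gmin d q Λ s * Ufun q Λ s ^ (q - 1) = 0 := by
  have e : ∀ s, gmin d q Λ s * Ufun q Λ s ^ (q - 1) =
      coefA d q * Ufun q Λ s ^ (q + q - 2) + coefB d q Λ * Ufun q Λ s ^ q := fun s => by
    have hU := Ufun_pos hq hΛ s
    have e1 : Ufun q Λ s ^ (q + q - 2) = Ufun q Λ s ^ (q - 1) * Ufun q Λ s ^ (q - 1) := by
      rw [← rpow_add hU]; ring_nf
    have e2 : Ufun q Λ s ^ q = Ufun q Λ s ^ (1 : ℝ) * Ufun q Λ s ^ (q - 1) := by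
      rw [← rpow_add hU]; ring_nf
    unfold gmin
    rw [e1, e2]; ring
  simp_rw [e]
  have q0 : 0 < q := by linarith
  rw [integral_add ((integrable_Ufun_rpow hq hΛ (by linarith)).const_mul _)
    ((integrable_Ufun_rpow hq hΛ q0).const_mul _), integral_const_mul, integral_const_mul]
  have r := moment_recursion hq hΛ q0
  have h3 : 3 * q - 2 ≠ 0 := by linarith
  have h4 : q * 3 - 2 ≠ 0 := by linarith
  have r' : ∫ s, Ufun q Λ s ^ (q + q - 2) = q ^ 2 * Λ / (3 * q - 2) * ∫ s, Ufun q Λ s ^ q := by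
    rw [show q + 2 * q - 2 = 3 * q - 2 by ring] at r
    field_simp at r ⊢
    linarith
  rw [r', coefB]; ring

theorem Ufun_neg (s : ℝ) : Ufun q Λ (-s) = Ufun q Λ s := by
  unfold Ufun; rw [mul_neg, cosh_neg]

theorem gmin_orth' (d : ℕ) (hq : 2 < q) (hΛ : 0 < Λ) :
    ∫ s, gmin d q Λ s * Ufun q Λ s ^ (q - 2) * deriv (Ufun q Λ) s = 0 := by
  refine integral_odd fun s => ?_
  simp only [deriv_Ufun hq hΛ, gmin, Ufun_neg, mul_neg, tanh_neg]
  ring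

theorem continuous_f0fun (d : ℕ) (hq : 2 < q) (hΛ : 0 < Λ) : Continuous (f0fun d q Λ) :=
  continuous_const.mul (continuous_Ufun_rpow hq hΛ _)

theorem integrable_f0fun_mul (d : ℕ) (hq : 2 < q) (hΛ : 0 < Λ) {g g' : ℝ → ℝ} (G : H1p g g') :
    Integrable fun s => f0fun d q Λ s * g s := by
  have hp : 0 < 2 * q - 3 := by linarith
  have := (int_mul_of_sq (continuous_Ufun_rpow hq hΛ (2 * q - 3)) G.cont
    (H1p_Ufun_rpow hq hΛ hp).sq G.sq).const_mul (Mconst d q)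
  refine this.congr (Eventually.of_forall fun s => ?_)
  simp only [f0fun]; ring

theorem integrable_pot (hq : 2 < q) (hΛ : 0 < Λ) {g k : ℝ → ℝ} (cg : Continuous g)
    (ck : Continuous k) (hi : Integrable fun s => g s * k s) :
    Integrable fun s => (q - 1) * Ufun q Λ s ^ (q - 2) * (g s * k s) := by
  have hp : 0 < q - 2 := by linarith
  refine int_bdd_mul ((q - 1) * betaV q Λ ^ (q - 2))
    (continuous_const.mul (continuous_Ufun_rpow hq hΛ _)) (cg.mul ck) (fun s => ?_) hi
  rw [abs_mul, abs_of_pos (by linarith : 0 < q - 1)]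
  exact mul_le_mul_of_nonneg_left (Ufun_rpow_le hq hΛ hp s) (by linarith)

/-- The density of the weak Euler–Lagrange equation of `gmin` tested against `g`. -/
def weakD (d : ℕ) (q Λ : ℝ) (g g' : ℝ → ℝ) (s : ℝ) : ℝ :=
  gmin' d q Λ s * g' s + Λ * (gmin d q Λ s * g s)
    - (q - 1) * Ufun q Λ s ^ (q - 2) * (gmin d q Λ s * g s) - f0fun d q Λ s * g s

theorem integrable_weakD (d : ℕ) (hq : 2 < q) (hΛ : 0 < Λ) {g g' : ℝ → ℝ} (G : H1p g g') :
    Integrable (weakD d q Λ g g') := by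
  have K := H1p_gmin d hq hΛ
  have i1 := int_mul_of_sq K.cont G.cont K.sq G.sq
  exact (((int_mul_of_sq K.cont' G.cont' K.sq' G.sq').add (i1.const_mul Λ)).sub
    (integrable_pot hq hΛ K.cont G.cont i1)).sub (integrable_f0fun_mul d hq hΛ G)

theorem integral_weakD (d : ℕ) (hq : 2 < q) (hΛ : 0 < Λ) {g g' : ℝ → ℝ} (G : H1p g g')
    (h0 : ∫ s, g s * Ufun q Λ s ^ (q - 1) = 0) : ∫ s, weakD d q Λ g g' s = 0 := by
  have K := H1p_gmin d hq hΛ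
  have i1 := integrable_weakD d hq hΛ G
  have i2 : Integrable fun s => g s * Ufun q Λ s ^ (q - 1) :=
    int_mul_of_sq G.cont (continuous_Ufun_rpow hq hΛ _) G.sq
      (H1p_Ufun_rpow hq hΛ (by linarith)).sq
  have z := integral_eq_zero_of_hasDerivAt_of_integrable
    (f := fun s => gmin' d q Λ s * g s)
    (f' := fun s => weakD d q Λ g g' s - lagr d q Λ * (g s * Ufun q Λ s ^ (q - 1)))
    (fun s => ((hasDerivAt_gmin' d hq hΛ s).mul (G.deriv s)).congr_deriv (by
      unfold weakD; ring)) (i1.sub (i2.const_mul _))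
    (int_mul_of_sq K.cont' G.cont K.sq' G.sq)
  rw [integral_sub i1 (i2.const_mul _), integral_const_mul, h0] at z
  linarith

/-- Completing the square around `gmin`. -/
theorem energy_identity (d : ℕ) (hq : 2 < q) (hΛ : 0 < Λ) (ε : ℝ) {g : ℝ → ℝ} (G : H1p g (deriv g))
    (h0 : ∫ s, g s * Ufun q Λ s ^ (q - 1) = 0) :
    Energy q Λ ε Λ (f0fun d q Λ) g =
      (∫ s, ((deriv g s - gmin' d q Λ s) ^ 2 + Λ * (g s - gmin d q Λ s) ^ 2)) -
      (∫ s, (q - 1) * Ufun q Λ s ^ (q - 2) * (g s - gmin d q Λ s) ^ 2) -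
      ε * (∫ s, (deriv g s ^ 2 + Λ * g s ^ 2)) - ∫ s, f0fun d q Λ s * gmin d q Λ s := by
  have K := H1p_gmin d hq hΛ
  have H : H1p (fun s => g s - gmin d q Λ s) (fun s => deriv g s - gmin' d q Λ s) := by
    simpa [sub_eq_add_neg] using G.lin K 1 (-1)
  have iD : Integrable fun s =>
      (deriv g s - gmin' d q Λ s) ^ 2 + Λ * (g s - gmin d q Λ s) ^ 2 :=
    H.sq'.add (H.sq.const_mul _)
  have iV : Integrable fun s => (q - 1) * Ufun q Λ s ^ (q - 2) * (g s - gmin d q Λ s) ^ 2 := by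
    have := integrable_pot hq hΛ H.cont H.cont (by simpa only [pow_two] using H.sq)
    simpa only [pow_two] using this
  have iG : Integrable fun s => deriv g s ^ 2 + Λ * g s ^ 2 := G.sq'.add (G.sq.const_mul _)
  have iW := integrable_weakD d hq hΛ G
  have iW0 := integrable_weakD d hq hΛ K
  have iF := integrable_f0fun_mul d hq hΛ K
  have e : ∀ s, (1 - ε) * (deriv g s ^ 2 + Λ * g s ^ 2) - (q - 1) * Ufun q Λ s ^ (q - 2) * g s ^ 2
      - 2 * f0fun d q Λ s * g s =
      (((((deriv g s - gmin' d q Λ s) ^ 2 + Λ * (g s - gmin d q Λ s) ^ 2) -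
      (q - 1) * Ufun q Λ s ^ (q - 2) * (g s - gmin d q Λ s) ^ 2) -
      ε * (deriv g s ^ 2 + Λ * g s ^ 2)) - f0fun d q Λ s * gmin d q Λ s) +
      (2 * weakD d q Λ g (deriv g) s - weakD d q Λ (gmin d q Λ) (gmin' d q Λ) s) := fun s => by
    unfold weakD; ring
  have i5 : Integrable fun s => ((deriv g s - gmin' d q Λ s) ^ 2 + Λ * (g s - gmin d q Λ s) ^ 2) -
      (q - 1) * Ufun q Λ s ^ (q - 2) * (g s - gmin d q Λ s) ^ 2 := iD.sub iV
  have i6 : Integrable fun s => ((deriv g s - gmin' d q Λ s) ^ 2 + Λ * (g s - gmin d q Λ s) ^ 2) -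
      (q - 1) * Ufun q Λ s ^ (q - 2) * (g s - gmin d q Λ s) ^ 2 -
      ε * (deriv g s ^ 2 + Λ * g s ^ 2) := i5.sub (iG.const_mul ε)
  have i7 : Integrable fun s => ((deriv g s - gmin' d q Λ s) ^ 2 + Λ * (g s - gmin d q Λ s) ^ 2) -
      (q - 1) * Ufun q Λ s ^ (q - 2) * (g s - gmin d q Λ s) ^ 2 -
      ε * (deriv g s ^ 2 + Λ * g s ^ 2) - f0fun d q Λ s * gmin d q Λ s := i6.sub iF
  have i8 : Integrable fun s => 2 * weakD d q Λ g (deriv g) s -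
      weakD d q Λ (gmin d q Λ) (gmin' d q Λ) s := (iW.const_mul 2).sub iW0
  unfold Energy
  simp_rw [e]
  rw [integral_add i7 i8, integral_sub i6 iF, integral_sub i5 (iG.const_mul ε),
    integral_sub iD iV, integral_sub (iW.const_mul 2) iW0, integral_const_mul, integral_const_mul,
    integral_weakD d hq hΛ G h0, integral_weakD d hq hΛ K (gmin_orth d hq hΛ)]
  ring

/-- Minus the value of the constrained problem at `ε = 0` in terms of a single moment of `u`. -/
theorem integral_f0fun_gmin (d : ℕ) (hq : 2 < q) (hΛ : 0 < Λ) :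
    ∫ s, f0fun d q Λ s * gmin d q Λ s =
      sphVol d / (4 * (d : ℝ) ^ 2) * (q * (q - 2) ^ 3 / (4 * (3 * q - 2))) *
        ∫ s, Ufun q Λ s ^ (3 * q - 4) := by
  have p1 : 0 < 3 * q - 4 := by linarith
  have p2 : 0 < 2 * q - 2 := by linarith
  have e : ∀ s, f0fun d q Λ s * gmin d q Λ s =
      Mconst d q * coefA d q * Ufun q Λ s ^ (3 * q - 4) +
      Mconst d q * coefB d q Λ * Ufun q Λ s ^ (2 * q - 2) := fun s => by
    have hU := Ufun_pos hq hΛ s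
    have e1 : Ufun q Λ s ^ (3 * q - 4) = Ufun q Λ s ^ (2 * q - 3) * Ufun q Λ s ^ (q - 1) := by
      rw [← rpow_add hU]; ring_nf
    have e2 : Ufun q Λ s ^ (2 * q - 2) = Ufun q Λ s ^ (2 * q - 3) * Ufun q Λ s ^ (1 : ℝ) := by
      rw [← rpow_add hU]; ring_nf
    unfold f0fun gmin
    rw [e1, e2]; ring
  simp_rw [e]
  rw [integral_add ((integrable_Ufun_rpow hq hΛ p1).const_mul _)
    ((integrable_Ufun_rpow hq hΛ p2).const_mul _), integral_const_mul, integral_const_mul]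
  have r := moment_recursion hq hΛ p2
  rw [show 2 * q - 2 + q - 2 = 3 * q - 4 by ring] at r
  generalize (∫ s, Ufun q Λ s ^ (3 * q - 4)) = I at r ⊢
  generalize (∫ s, Ufun q Λ s ^ (2 * q - 2)) = J at r ⊢
  have h1 : q - 1 ≠ 0 := by linarith
  have h2 : q - 2 ≠ 0 := by linarith
  have h3 : q ≠ 0 := by linarith
  have h4 : 3 * q - 2 ≠ 0 := by linarith
  have r' : Λ * J = (5 * q - 6) / (2 * q * (q - 1)) * I := by
    field_simp at r ⊢
    linarith
  have hS : √(sphVol d) ^ 2 = sphVol d := sq_sqrt ENNReal.toReal_nonneg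
  have eB : Mconst d q * coefB d q Λ * J =
      -(Mconst d q * coefA d q * (q ^ 2 / (3 * q - 2)) * (Λ * J)) := by
    unfold coefB; ring
  have eA : Mconst d q * coefA d q = (q - 1) * (q - 2) * q * (sphVol d / (8 * (d : ℝ) ^ 2)) := by
    rcases eq_or_ne (d : ℝ) 0 with h0 | h0
    · simp [Mconst, h0]
    · rw [← hS]; unfold coefA Mconst; field_simp; ring
  rw [eB, r', eA]
  generalize hT : sphVol d / (8 * (d : ℝ) ^ 2) = T
  have : sphVol d / (4 * (d : ℝ) ^ 2) = 2 * T := by rw [← hT]; ring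
  rw [this]
  have h5 : q * 3 - 2 ≠ 0 := by linarith
  field_simp
  ring

end Minimizer

end

/-- Energy of the degree 0 solution. Under the Felli–Schneider condition,
as ε → 0⁺,
`E⁽⁰⁾(ε) = -(β^{3q-4}/α)(|𝕊^{d-1}|/(4d²))(Γ((3q-4)/(q-2))√π/Γ((3q-4)/(q-2)+1/2))·(q(q-2)³/(4(3q-2))) + O(ε)`. -/
theorem E0_asymptotics (d : ℕ) (hd : 2 ≤ d) (q : ℝ) (hq : 2 < q)
    (hq' : d = 2 ∨ q < 2 * d / ((d : ℝ) - 2)) (Λ : ℝ) (hΛ : 0 < Λ)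
    (hFS : Λ = 4 * ((d : ℝ) - 1) / (q ^ 2 - 4)) :
    (fun ε : ℝ => E0 d q Λ ε -
        (-(betaV q Λ ^ (3 * q - 4) / alphaV q Λ) * (sphVol d / (4 * (d : ℝ) ^ 2)) *
          (Real.Gamma ((3 * q - 4) / (q - 2)) * Real.sqrt π /
            Real.Gamma ((3 * q - 4) / (q - 2) + 1 / 2)) *
          (q * (q - 2) ^ 3 / (4 * (3 * q - 2)))))
      =O[𝓝[≥] (0 : ℝ)] fun ε => ε := by
  have K := H1p_gmin d hq hΛ
  set D₀ := ∫ s, (gmin' d q Λ s ^ 2 + Λ * gmin d q Λ s ^ 2) with hD₀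
  have hdg : deriv (gmin d q Λ) = gmin' d q Λ := funext fun s => (K.deriv s).deriv
  have hval := integral_f0fun_gmin d hq hΛ
  rw [integral_Ufun_rpow hq hΛ (by linarith : 0 < 3 * q - 4)] at hval
  have hq4 : 0 < 3 * q - 4 := by linarith
  set κ := q / (3 * q - 4) with hκ
  have hκ1 : κ < 1 := by rw [hκ, div_lt_one hq4]; linarith
  have hev : ∀ᶠ ε in 𝓝[≥] (0 : ℝ), ε ∈ Set.Ico (0 : ℝ) ((1 - κ) / 2) :=
    Ico_mem_nhdsGE (by linarith)
  refine IsBigO.of_bound (2 * D₀) ?_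
  filter_upwards [hev] with ε ⟨hε0, hε1⟩
  have hD0 : 0 ≤ D₀ := integral_nonneg fun s => by
    simp only [Pi.zero_apply]; positivity
  -- `gmin` is a competitor
  have hmem : -ε * D₀ - ∫ s, f0fun d q Λ s * gmin d q Λ s ∈ {r : ℝ | ∃ g : ℝ → ℝ, MemH1R g ∧
      (∫ s, g s * Ufun q Λ s ^ (q - 1)) = 0 ∧
      (∫ s, g s * Ufun q Λ s ^ (q - 2) * deriv (Ufun q Λ) s) = 0 ∧
      r = Energy q Λ ε Λ (f0fun d q Λ) g} := by
    refine ⟨gmin d q Λ, ⟨?_, K.sq, by rw [hdg]; exact K.sq'⟩, gmin_orth d hq hΛ,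
      gmin_orth' d hq hΛ, ?_⟩
    · exact contDiff_one_iff_deriv.2 ⟨fun s => (K.deriv s).differentiableAt, by
        rw [hdg]; exact K.cont'⟩
    · rw [energy_identity d hq hΛ ε (by rw [hdg]; exact K) (gmin_orth d hq hΛ), hdg]
      simp [hD₀]
  have hlow : ∀ r ∈ {r : ℝ | ∃ g : ℝ → ℝ, MemH1R g ∧
      (∫ s, g s * Ufun q Λ s ^ (q - 1)) = 0 ∧
      (∫ s, g s * Ufun q Λ s ^ (q - 2) * deriv (Ufun q Λ) s) = 0 ∧
      r = Energy q Λ ε Λ (f0fun d q Λ) g},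
      -(2 * ε) * D₀ - ∫ s, f0fun d q Λ s * gmin d q Λ s ≤ r := by
    rintro r ⟨g, hg, h0, h1, rfl⟩
    have G := hg.H1p
    rw [energy_identity d hq hΛ ε G h0]
    have H : H1p (fun s => g s - gmin d q Λ s) (fun s => deriv g s - gmin' d q Λ s) := by
      simpa [sub_eq_add_neg] using G.lin K 1 (-1)
    have iU : ∀ {k k' : ℝ → ℝ}, H1p k k' → Integrable fun s => k s * Ufun q Λ s ^ (q - 1) :=
      fun hk => int_mul_of_sq hk.cont (continuous_Ufun_rpow hq hΛ _) hk.sq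
        (H1p_Ufun_rpow hq hΛ (by linarith)).sq
    have iU' : ∀ {k k' : ℝ → ℝ}, H1p k k' →
        Integrable fun s => k s * Ufun q Λ s ^ (q - 2) * deriv (Ufun q Λ) s := fun {k k'} hk => by
      have := (int_bdd_mul 1 continuous_tanh_alpha
        (hk.cont.mul (continuous_Ufun_rpow hq hΛ (q - 1)))
        (fun s => (abs_tanh_lt_one (alphaV q Λ * s)).le) (iU hk)).const_mul (-√Λ)
      refine this.congr (Eventually.of_forall fun s => ?_)
      simp only [Pi.mul_apply]
      rw [deriv_Ufun hq hΛ, show q - 1 = q - 2 + 1 by ring, rpow_add_one (Ufun_pos hq hΛ s).ne']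
      ring
    have o0 : ∫ s, (g s - gmin d q Λ s) * Ufun q Λ s ^ (q - 1) = 0 := by
      simp_rw [sub_mul]
      rw [integral_sub (iU G) (iU K), h0, gmin_orth d hq hΛ, sub_zero]
    have o1 : ∫ s, (g s - gmin d q Λ s) * Ufun q Λ s ^ (q - 2) * deriv (Ufun q Λ) s = 0 := by
      simp_rw [sub_mul]
      rw [integral_sub (iU' G) (iU' K), h1, gmin_orth' d hq hΛ, sub_zero]
    have hco := coercivity hq hΛ H o0 o1
    have iH : Integrable fun s =>
        (deriv g s - gmin' d q Λ s) ^ 2 + Λ * (g s - gmin d q Λ s) ^ 2 :=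
      H.sq'.add (H.sq.const_mul _)
    have iK : Integrable fun s => gmin' d q Λ s ^ 2 + Λ * gmin d q Λ s ^ 2 :=
      K.sq'.add (K.sq.const_mul _)
    have iG : Integrable fun s => deriv g s ^ 2 + Λ * g s ^ 2 := G.sq'.add (G.sq.const_mul _)
    have hpar : ∫ s, (deriv g s ^ 2 + Λ * g s ^ 2) ≤ 2 * D₀ +
        2 * ∫ s, ((deriv g s - gmin' d q Λ s) ^ 2 + Λ * (g s - gmin d q Λ s) ^ 2) := by
      rw [hD₀, ← integral_const_mul, ← integral_const_mul,
        ← integral_add (iK.const_mul 2) (iH.const_mul 2)]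
      refine integral_mono iG ((iK.const_mul 2).add (iH.const_mul 2)) fun s => ?_
      beta_reduce
      nlinarith [sq_nonneg (deriv g s - 2 * gmin' d q Λ s),
        mul_nonneg hΛ.le (sq_nonneg (g s - 2 * gmin d q Λ s))]
    have hX : 0 ≤ ∫ s, ((deriv g s - gmin' d q Λ s) ^ 2 + Λ * (g s - gmin d q Λ s) ^ 2) :=
      integral_nonneg fun s => by simp only [Pi.zero_apply]; positivity
    rw [← hκ] at hco
    generalize (∫ s, ((deriv g s - gmin' d q Λ s) ^ 2 + Λ * (g s - gmin d q Λ s) ^ 2)) = X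
      at hco hpar hX ⊢
    generalize (∫ s, (deriv g s ^ 2 + Λ * g s ^ 2)) = Y at hpar ⊢
    have a1 := mul_le_mul_of_nonneg_left hpar hε0
    have a2 : 0 ≤ (1 - κ - 2 * ε) * X := mul_nonneg (by linarith) hX
    linarith
  have hup : E0 d q Λ ε ≤ -ε * D₀ - ∫ s, f0fun d q Λ s * gmin d q Λ s :=
    csInf_le ⟨_, hlow⟩ hmem
  have hlo : -(2 * ε) * D₀ - ∫ s, f0fun d q Λ s * gmin d q Λ s ≤ E0 d q Λ ε :=
    le_csInf ⟨_, hmem⟩ hlow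
  rw [hval] at hup hlo
  have hεD := mul_nonneg hε0 hD0
  rw [Real.norm_eq_abs, Real.norm_eq_abs, abs_of_nonneg hε0, abs_le]
  constructor <;> linarith
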